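/- A consistent set T of explicit literals is an answer set of a program Π if and only if ⟨T,T⟩ is an equilibrium model of Π. -/

import Mathlib

open scoped Classical

namespace X5Paper

/-- Explicit literals: an atom `p` or its explicit negation `∼p`. -/
inductive XLit (At : Type) : Type
  | pos : At → XLit At
  | neg : At → XLit At

/-- A set of explicit literals is consistent if it contains no atom together
with its explicit negation. -/
def Consistent {At : Type} (T : Set (XLit At)) : Prop :=
  ∀ p : At, ¬ (XLit.pos p ∈ T ∧ XLit.neg p ∈ T)

/-- Nested expressions: ⊤, ⊥, atoms, ∧, ∨, default negation ¬, explicit negation ∼. -/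
inductive NExp (At : Type) : Type
  | top : NExp At
  | bot : NExp At
  | atom : At → NExp At
  | conj : NExp At → NExp At → NExp At
  | disj : NExp At → NExp At → NExp At
  | dneg : NExp At → NExp At
  | xneg : NExp At → NExp At

variable {At : Type}

mutual
/-- Satisfaction `T ⊨ F` of a nested expression by a set of explicit literals. -/
def NExp.sat (T : Set (XLit At)) : NExp At → Prop
  | .top => True
  | .bot => False
  | .atom p => XLit.pos p ∈ T
  | .conj F G => NExp.sat T F ∧ NExp.sat T G
  | .disj F G => NExp.sat T F ∨ NExp.sat T G
  | .dneg F => ¬ NExp.sat T F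
  | .xneg F => NExp.fals T F

/-- Falsification `T ⫤ F` of a nested expression by a set of explicit literals. -/
def NExp.fals (T : Set (XLit At)) : NExp At → Prop
  | .top => False
  | .bot => True
  | .atom p => XLit.neg p ∈ T
  | .conj F G => NExp.fals T F ∨ NExp.fals T G
  | .disj F G => NExp.fals T F ∧ NExp.fals T G
  | .dneg F => NExp.sat T F
  | .xneg F => NExp.sat T F
end

/-- The reduct `F^T` of a nested expression. -/
noncomputable def NExp.reduct (T : Set (XLit At)) : NExp At → NExp At
  | .top => .top
  | .bot => .bot
  | .atom p => .atom p
  | .conj F G => .conj (NExp.reduct T F) (NExp.reduct T G)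
  | .disj F G => .disj (NExp.reduct T F) (NExp.reduct T G)
  | .dneg F => if NExp.sat T F then .bot else .top
  | .xneg F => .xneg (NExp.reduct T F)

/-- Formulas: atoms, ⊥, ∧, ∨, →, explicit negation ∼. -/
inductive Frm (At : Type) : Type
  | atom : At → Frm At
  | bot : Frm At
  | conj : Frm At → Frm At → Frm At
  | disj : Frm At → Frm At → Frm At
  | impl : Frm At → Frm At → Frm At
  | xneg : Frm At → Frm At

/-- Default negation `¬φ := φ → ⊥`. -/
def Frm.neg (φ : Frm At) : Frm At := Frm.impl φ Frm.bot

/-- `⊤ := ¬⊥`. -/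
def Frm.top : Frm At := Frm.neg Frm.bot

/-- Weak equivalence `φ ↔ ψ := (φ→ψ) ∧ (ψ→φ)`. -/
def Frm.iff (φ ψ : Frm At) : Frm At := Frm.conj (Frm.impl φ ψ) (Frm.impl ψ φ)

/-- Strong equivalence connective `φ ⇔ ψ := (φ↔ψ) ∧ (∼φ↔∼ψ)`. -/
def Frm.siff (φ ψ : Frm At) : Frm At :=
  Frm.conj (Frm.iff φ ψ) (Frm.iff (Frm.xneg φ) (Frm.xneg ψ))

mutual
/-- X5 satisfaction `⟨H,T⟩ ⊨ φ`. -/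
def Sat : Set (XLit At) → Set (XLit At) → Frm At → Prop
  | H, _, .atom p => XLit.pos p ∈ H
  | _, _, .bot => False
  | H, T, .conj φ ψ => Sat H T φ ∧ Sat H T ψ
  | H, T, .disj φ ψ => Sat H T φ ∨ Sat H T ψ
  | H, T, .impl φ ψ => (Sat H T φ → Sat H T ψ) ∧ (Sat T T φ → Sat T T ψ)
  | H, T, .xneg φ => Fals H T φ

/-- X5 falsification `⟨H,T⟩ ⫤ φ`. -/
def Fals : Set (XLit At) → Set (XLit At) → Frm At → Prop
  | H, _, .atom p => XLit.neg p ∈ H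
  | _, _, .bot => True
  | H, T, .conj φ ψ => Fals H T φ ∨ Fals H T ψ
  | H, T, .disj φ ψ => Fals H T φ ∧ Fals H T ψ
  | H, T, .impl φ ψ => Sat T T φ ∧ Fals H T ψ
  | H, T, .xneg φ => Sat H T φ
end

/-- X5 validity: satisfied by every X5-interpretation `⟨H,T⟩`. -/
def X5Valid (φ : Frm At) : Prop :=
  ∀ H T : Set (XLit At), Consistent H → Consistent T → H ⊆ T → Sat H T φ

/-- Nested expressions viewed as formulas (`¬F := F → ⊥`, `⊤ := ¬⊥`). -/
def NExp.toFrm : NExp At → Frm At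
  | .top => Frm.top
  | .bot => .bot
  | .atom p => .atom p
  | .conj F G => .conj F.toFrm G.toFrm
  | .disj F G => .disj F.toFrm G.toFrm
  | .dneg F => Frm.neg F.toFrm
  | .xneg F => .xneg F.toFrm

/-- Uniform substitution `φ[α/p]`. -/
noncomputable def Frm.subst (p : At) (α : Frm At) : Frm At → Frm At
  | .atom q => if q = p then α else .atom q
  | .bot => .bot
  | .conj φ ψ => .conj (Frm.subst p α φ) (Frm.subst p α ψ)
  | .disj φ ψ => .disj (Frm.subst p α φ) (Frm.subst p α ψ)
  | .impl φ ψ => .impl (Frm.subst p α φ) (Frm.subst p α ψ)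
  | .xneg φ => .xneg (Frm.subst p α φ)

/-- A formula contains no explicit negation. -/
def NoXneg : Frm At → Prop
  | .atom _ => True
  | .bot => True
  | .conj φ ψ => NoXneg φ ∧ NoXneg ψ
  | .disj φ ψ => NoXneg φ ∧ NoXneg ψ
  | .impl φ ψ => NoXneg φ ∧ NoXneg ψ
  | .xneg _ => False

/-- HT satisfaction for (∼-free) formulas; the `∼` clause is a dummy. -/
def HTSat : Set At → Set At → Frm At → Prop
  | H, _, .atom p => p ∈ H
  | _, _, .bot => False
  | H, T, .conj φ ψ => HTSat H T φ ∧ HTSat H T ψ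
  | H, T, .disj φ ψ => HTSat H T φ ∨ HTSat H T ψ
  | H, T, .impl φ ψ => (HTSat H T φ → HTSat H T ψ) ∧ (HTSat T T φ → HTSat T T ψ)
  | _, _, .xneg _ => False

/-- HT validity for ∼-free formulas. -/
def HTValid (φ : Frm At) : Prop :=
  ∀ H T : Set At, H ⊆ T → HTSat H T φ

/-- Atom `p` occurs in a formula. -/
def Frm.occurs (p : At) : Frm At → Prop
  | .atom q => q = p
  | .bot => False
  | .conj φ ψ => Frm.occurs p φ ∨ Frm.occurs p ψ
  | .disj φ ψ => Frm.occurs p φ ∨ Frm.occurs p ψ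
  | .impl φ ψ => Frm.occurs p φ ∨ Frm.occurs p ψ
  | .xneg φ => Frm.occurs p φ

/-- Atom `p` occurs only outside the scope of explicit negation `∼`. -/
def OutsideXneg (p : At) : Frm At → Prop
  | .atom _ => True
  | .bot => True
  | .conj φ ψ => OutsideXneg p φ ∧ OutsideXneg p ψ
  | .disj φ ψ => OutsideXneg p φ ∧ OutsideXneg p ψ
  | .impl φ ψ => OutsideXneg p φ ∧ OutsideXneg p ψ
  | .xneg φ => ¬ Frm.occurs p φ

/-- A rule `F → G` of a program. -/
abbrev Rule (At : Type) := NExp At × NExp At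

/-- `T` is a model of a program: it satisfies the head whenever it satisfies the body. -/
def NModels (T : Set (XLit At)) (Prog : Set (Rule At)) : Prop :=
  ∀ r ∈ Prog, NExp.sat T r.1 → NExp.sat T r.2

/-- The reduct `Π^T` of a program. -/
noncomputable def progReduct (T : Set (XLit At)) (Prog : Set (Rule At)) : Set (Rule At) :=
  (fun r : Rule At => (NExp.reduct T r.1, NExp.reduct T r.2)) '' Prog

/-- `T` is an answer set of `Π`: a ⊆-minimal (consistent) model of the reduct `Π^T`. -/
def AnswerSet (Prog : Set (Rule At)) (T : Set (XLit At)) : Prop :=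
  Consistent T ∧ NModels T (progReduct T Prog) ∧
    ∀ T' : Set (XLit At), Consistent T' → T' ⊆ T → NModels T' (progReduct T Prog) → T' = T

/-- The theory corresponding to a program: each rule `F → G` read as an implication. -/
def ruleTheory (Prog : Set (Rule At)) : Set (Frm At) :=
  (fun r : Rule At => Frm.impl r.1.toFrm r.2.toFrm) '' Prog

/-- `⟨T,T⟩` is an equilibrium model of the theory `Γ`. -/
def EqModel (Γ : Set (Frm At)) (T : Set (XLit At)) : Prop :=
  Consistent T ∧ (∀ φ ∈ Γ, Sat T T φ) ∧
    ¬ ∃ H : Set (XLit At), Consistent H ∧ H ⊂ T ∧ ∀ φ ∈ Γ, Sat H T φ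

mutual
/-- Generalized Ferraris reduct `φ^T₊` of a formula (a nested expression). -/
noncomputable def redPos (T : Set (XLit At)) : Frm At → NExp At
  | .atom p => if XLit.pos p ∈ T then .atom p else .bot
  | .bot => .bot
  | .conj α β => if Sat T T (Frm.conj α β) then .conj (redPos T α) (redPos T β) else .bot
  | .disj α β => if Sat T T (Frm.disj α β) then .disj (redPos T α) (redPos T β) else .bot
  | .impl α β => if Sat T T (Frm.impl α β) then .disj (.dneg (redPos T α)) (redPos T β) else .bot
  | .xneg α => if Sat T T (Frm.xneg α) then .xneg (redNeg T α) else .bot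

/-- Generalized Ferraris reduct `φ^T₋` of a formula (a nested expression). -/
noncomputable def redNeg (T : Set (XLit At)) : Frm At → NExp At
  | .atom p => if XLit.neg p ∈ T then .atom p else .top
  | .bot => .bot
  | .conj α β => if Fals T T (Frm.conj α β) then .conj (redNeg T α) (redNeg T β) else .top
  | .disj α β => if Fals T T (Frm.disj α β) then .disj (redNeg T α) (redNeg T β) else .top
  | .impl α β => if Fals T T (Frm.impl α β) then redNeg T β else .top
  | .xneg α => if Fals T T (Frm.xneg α) then .xneg (redPos T α) else .top
end

mutual
/-- Generalized Ferraris reduct `F^T₊` of a nested expression. -/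
noncomputable def nRedPos (T : Set (XLit At)) : NExp At → NExp At
  | .top => .top
  | .bot => .bot
  | .atom p => if XLit.pos p ∈ T then .atom p else .bot
  | .conj α β => if NExp.sat T (NExp.conj α β) then .conj (nRedPos T α) (nRedPos T β) else .bot
  | .disj α β => if NExp.sat T (NExp.disj α β) then .disj (nRedPos T α) (nRedPos T β) else .bot
  | .dneg α => if NExp.sat T (NExp.dneg α) then .dneg (nRedPos T α) else .bot
  | .xneg α => if NExp.sat T (NExp.xneg α) then .xneg (nRedNeg T α) else .bot

/-- Generalized Ferraris reduct `F^T₋` of a nested expression. -/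
noncomputable def nRedNeg (T : Set (XLit At)) : NExp At → NExp At
  | .top => .top
  | .bot => .bot
  | .atom p => if XLit.neg p ∈ T then .atom p else .top
  | .conj α β => if NExp.fals T (NExp.conj α β) then .conj (nRedNeg T α) (nRedNeg T β) else .top
  | .disj α β => if NExp.fals T (NExp.disj α β) then .disj (nRedNeg T α) (nRedNeg T β) else .top
  | .dneg α => if NExp.fals T (NExp.dneg α) then .bot else .top
  | .xneg α => if NExp.fals T (NExp.xneg α) then .xneg (nRedPos T α) else .top
end

/-- The five-valued valuation `M(φ)` of `M = ⟨H,T⟩`. -/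
noncomputable def val (H T : Set (XLit At)) : Frm At → ℤ
  | .atom p =>
      if XLit.pos p ∈ H then 2
      else if XLit.neg p ∈ H then -2
      else if XLit.pos p ∈ T then 1
      else if XLit.neg p ∈ T then -1
      else 0
  | .bot => -2
  | .conj φ ψ => min (val H T φ) (val H T ψ)
  | .disj φ ψ => max (val H T φ) (val H T ψ)
  | .impl φ ψ => if val H T φ ≤ max (val H T ψ) 0 then 2 else val H T ψ
  | .xneg φ => - val H T φ

/-!
Default negation is the only connective of nested expressions whose value at `⟨H, T⟩` involves `T`.
By persistence, `¬φ` holds at `⟨H, T⟩` exactly when `φ` fails at `⟨T, T⟩`, and this is the truth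
value that the reduct substitutes for `¬φ`. Hence evaluating `F^T` in `H` is the same as evaluating
`F` in `⟨H, T⟩`. When `T` is a model of `Π^T`, the models `H ⊆ T` of `Π^T` are therefore the `H` such
that `⟨H, T⟩` is a model of `Π`, and the two minimality conditions on `T` coincide.
-/

section Persistence

variable {H T : Set (XLit At)}

mutual

theorem Sat.to_total (hHT : H ⊆ T) : ∀ {φ : Frm At}, Sat H T φ → Sat T T φ
  | .atom _, h => hHT h
  | .bot, h => h
  | .conj _ _, h => ⟨h.1.to_total hHT, h.2.to_total hHT⟩
  | .disj _ _, h => h.imp (Sat.to_total hHT) (Sat.to_total hHT)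
  | .impl _ _, h => ⟨h.2, h.2⟩
  | .xneg _, h => Fals.to_total hHT h

theorem Fals.to_total (hHT : H ⊆ T) : ∀ {φ : Frm At}, Fals H T φ → Fals T T φ
  | .atom _, h => hHT h
  | .bot, h => h
  | .conj _ _, h => h.imp (Fals.to_total hHT) (Fals.to_total hHT)
  | .disj _ _, h => ⟨h.1.to_total hHT, h.2.to_total hHT⟩
  | .impl _ _, h => ⟨h.1, h.2.to_total hHT⟩
  | .xneg _, h => Sat.to_total hHT h

end

theorem sat_neg_iff (hHT : H ⊆ T) {φ : Frm At} : Sat H T φ.neg ↔ ¬ Sat T T φ :=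
  ⟨fun h => h.2, fun h => ⟨fun hφ => h (hφ.to_total hHT), h⟩⟩

theorem fals_neg_iff {φ : Frm At} : Fals H T φ.neg ↔ Sat T T φ :=
  and_iff_left trivial

theorem sat_top : Sat H T Frm.top :=
  ⟨id, id⟩

theorem not_fals_top : ¬ Fals H T Frm.top :=
  fun h => h.1

end Persistence

namespace NExp

variable {H T : Set (XLit At)}

mutual

theorem sat_toFrm_total : ∀ F : NExp At, Sat T T F.toFrm ↔ F.sat T
  | .top => iff_of_true sat_top trivial
  | .bot => Iff.rfl
  | .atom _ => Iff.rfl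
  | .conj F G => and_congr F.sat_toFrm_total G.sat_toFrm_total
  | .disj F G => or_congr F.sat_toFrm_total G.sat_toFrm_total
  | .dneg F => (sat_neg_iff subset_rfl).trans F.sat_toFrm_total.not
  | .xneg F => F.fals_toFrm_total

theorem fals_toFrm_total : ∀ F : NExp At, Fals T T F.toFrm ↔ F.fals T
  | .top => iff_of_false not_fals_top id
  | .bot => Iff.rfl
  | .atom _ => Iff.rfl
  | .conj F G => or_congr F.fals_toFrm_total G.fals_toFrm_total
  | .disj F G => and_congr F.fals_toFrm_total G.fals_toFrm_total
  | .dneg F => fals_neg_iff.trans F.sat_toFrm_total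
  | .xneg F => F.sat_toFrm_total

end

theorem sat_reduct_dneg {F : NExp At} : (F.dneg.reduct T).sat H ↔ ¬ F.sat T := by
  by_cases hF : F.sat T <;> simp [reduct, sat, hF]

theorem fals_reduct_dneg {F : NExp At} : (F.dneg.reduct T).fals H ↔ F.sat T := by
  by_cases hF : F.sat T <;> simp [reduct, fals, hF]

mutual

theorem sat_reduct_iff (hHT : H ⊆ T) : ∀ F : NExp At, (F.reduct T).sat H ↔ Sat H T F.toFrm
  | .top => iff_of_true trivial sat_top
  | .bot => Iff.rfl
  | .atom _ => Iff.rfl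
  | .conj F G => and_congr (F.sat_reduct_iff hHT) (G.sat_reduct_iff hHT)
  | .disj F G => or_congr (F.sat_reduct_iff hHT) (G.sat_reduct_iff hHT)
  | .dneg F => calc
      (F.dneg.reduct T).sat H ↔ ¬ F.sat T := sat_reduct_dneg
      _ ↔ ¬ Sat T T F.toFrm := F.sat_toFrm_total.not.symm
      _ ↔ Sat H T F.toFrm.neg := (sat_neg_iff hHT).symm
  | .xneg F => F.fals_reduct_iff hHT

theorem fals_reduct_iff (hHT : H ⊆ T) : ∀ F : NExp At, (F.reduct T).fals H ↔ Fals H T F.toFrm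
  | .top => iff_of_false id not_fals_top
  | .bot => Iff.rfl
  | .atom _ => Iff.rfl
  | .conj F G => or_congr (F.fals_reduct_iff hHT) (G.fals_reduct_iff hHT)
  | .disj F G => and_congr (F.fals_reduct_iff hHT) (G.fals_reduct_iff hHT)
  | .dneg F => calc
      (F.dneg.reduct T).fals H ↔ F.sat T := fals_reduct_dneg
      _ ↔ Sat T T F.toFrm := F.sat_toFrm_total.symm
      _ ↔ Fals H T F.toFrm.neg := fals_neg_iff.symm
  | .xneg F => F.sat_reduct_iff hHT

end

end NExp

section Programs

variable {H T : Set (XLit At)} {Prog : Set (Rule At)}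

theorem nModels_progReduct_iff (hHT : H ⊆ T) :
    NModels H (progReduct T Prog) ↔ ∀ r ∈ Prog, Sat H T r.1.toFrm → Sat H T r.2.toFrm := by
  simp only [NModels, progReduct, Set.forall_mem_image, NExp.sat_reduct_iff hHT]

theorem forall_ruleTheory_sat_iff (hHT : H ⊆ T) :
    (∀ φ ∈ ruleTheory Prog, Sat H T φ) ↔
      NModels H (progReduct T Prog) ∧ NModels T (progReduct T Prog) := by
  simp only [ruleTheory, Set.forall_mem_image, Sat, nModels_progReduct_iff hHT,
    nModels_progReduct_iff (subset_refl T), forall_and]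

theorem forall_ruleTheory_sat_total_iff :
    (∀ φ ∈ ruleTheory Prog, Sat T T φ) ↔ NModels T (progReduct T Prog) :=
  (forall_ruleTheory_sat_iff subset_rfl).trans and_self_iff

end Programs

/-- a consistent set `T` of explicit literals is an answer set of
the program `Prog` iff `⟨T,T⟩` is an equilibrium model of `Prog`. -/
theorem stmt7 (At : Type) (Prog : Set (Rule At)) (T : Set (XLit At))
    (hT : Consistent T) :
    AnswerSet Prog T ↔ EqModel (ruleTheory Prog) T := by
  rw [AnswerSet, EqModel, forall_ruleTheory_sat_total_iff]
  refine and_congr_right fun _ => and_congr_right fun hTmodel => ?_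
  have hmodel {H : Set (XLit At)} (hHT : H ⊆ T) :
      NModels H (progReduct T Prog) ↔ ∀ φ ∈ ruleTheory Prog, Sat H T φ := by
    rw [forall_ruleTheory_sat_iff hHT, and_iff_left hTmodel]
  constructor
  · rintro hmin ⟨H, hH, hHT, hsat⟩
    exact hHT.ne (hmin H hH hHT.subset ((hmodel hHT.subset).2 hsat))
  · intro hmin H hH hHT hHmodel
    by_contra hne
    exact hmin ⟨H, hH, hHT.ssubset_of_ne hne, (hmodel hHT).1 hHmodel⟩

end X5Paper
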